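/- arXiv:1505.04885 — 5 statements merged into one kernel-verified Lean document; each statement's English description precedes it below -/
import Mathlib

section
/- Monotonicity of Kalman filter performance in packet reception probabilities (Lemma 1, general form): Let n, M, N be positive integers, A an n×n real matrix, X a positive semidefinite n×n real matrix, C_1,…,C_M row vectors in ℝ^{1×n}, and R = diag(r_1,…,r_M) a diagonal M×M matrix with r_i > 0 for all i. For each i let θ_i : {0,1}^N → {0,1} be monotone nondecreasing with respect to the coordinatewise order on {0,1}^N. For a parameter vector p ∈ [0,1]^N define the product Bernoulli weight μ_p(ω) = ∏_{j=1}^N p_j^{ω_j}(1−p_j)^{1−ω_j} for ω ∈ {0,1}^N, and define the expected correction term T_p(X) = Σ_{ω ∈ {0,1}^N} μ_p(ω) · A X C(ω)^T (C(ω) X C(ω)^T + R)^{−1} C(ω) X A^T, where C(ω) is the M×n matrix whose i-th row is θ_i(ω)·C_i. Then for any p, q ∈ [0,1]^N with p_j ≤ q_j for all j, the matrix T_q(X) − T_p(X) is positive semidefinite; equivalently, the one-step expected error covariance f_p(X) = A X A^T + Q − T_p(X) satisfies f_p(X) ≥ f_q(X) in the Loewner (positive semidefinite) order for any symmetric Q.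 -/
open Matrix Finset

/-!
The monotone coupling of two product Bernoulli measures shows that the expectation of a monotone
function on `{0,1}^N` increases with the success probabilities. It therefore suffices that
`ω ↦ C(ω)ᵀ (C(ω) X C(ω)ᵀ + R)⁻¹ C(ω)` is monotone in the Loewner order. Losing further measurements
replaces `C` by `L C` for a diagonal 0-1 matrix `L`, and `L R Lᵀ ≤ R` because `R` is diagonal. With
`S = C X Cᵀ + R` and `S' = L C X Cᵀ Lᵀ + R` this gives `L S Lᵀ ≤ S'`, and both this inequality and
the desired `Lᵀ S'⁻¹ L ≤ S⁻¹` say that the block matrix `[S⁻¹, Lᵀ; L, S']` is positive semidefinite.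
-/

open scoped MatrixOrder ComplexOrder

section BernoulliExpectation

variable {ι R E : Type*} [Fintype ι] [CommRing R]

/-- The product Bernoulli weight of `ω ∈ {0,1}^ι` with success probabilities `p`. No constraint is
put on `p`, so that this is a polynomial in `p`; it is a probability when `p` lies in `[0,1]^ι`. -/
def bernoulliWeight (p : ι → R) (ω : ι → Bool) : R :=
  ∏ j, if ω j then p j else 1 - p j

/-- The expectation of `g` under the product Bernoulli measure with success probabilities `p`,
written as a finite sum so that `g` may take values in any module. -/
def bernoulliExpectation [DecidableEq ι] [AddCommGroup E] [Module R E] (p : ι → R)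
    (g : (ι → Bool) → E) : E :=
  ∑ ω, bernoulliWeight p ω • g ω

/-- The joint weight of two Bernoulli variables with success probabilities `a ≤ b`, the first of
which almost surely does not exceed the second. -/
def monotoneCoupling (a b : R) : Bool → Bool → R
  | true, true => a
  | true, false => 0
  | false, true => b - a
  | false, false => 1 - b

lemma sum_monotoneCoupling_right (a b : R) (x : Bool) :
    ∑ y, monotoneCoupling a b x y = if x then a else 1 - a := by
  cases x <;> simp [monotoneCoupling]

lemma sum_monotoneCoupling_left (a b : R) (y : Bool) :
    ∑ x, monotoneCoupling a b x y = if y then b else 1 - b := by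
  cases y <;> simp [monotoneCoupling]

lemma sum_prod_monotoneCoupling_right [DecidableEq ι] (p q : ι → R) (ω : ι → Bool) :
    ∑ η : ι → Bool, ∏ j, monotoneCoupling (p j) (q j) (ω j) (η j) = bernoulliWeight p ω := by
  simp_rw [← Fintype.prod_sum fun j y ↦ monotoneCoupling (p j) (q j) (ω j) y,
    sum_monotoneCoupling_right, bernoulliWeight]

lemma sum_prod_monotoneCoupling_left [DecidableEq ι] (p q : ι → R) (η : ι → Bool) :
    ∑ ω : ι → Bool, ∏ j, monotoneCoupling (p j) (q j) (ω j) (η j) = bernoulliWeight q η := by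
  simp_rw [← Fintype.prod_sum fun j x ↦ monotoneCoupling (p j) (q j) x (η j),
    sum_monotoneCoupling_left, bernoulliWeight]

lemma prod_monotoneCoupling_eq_zero_of_not_le {ω η : ι → Bool} (h : ¬ω ≤ η) (p q : ι → R) :
    ∏ j, monotoneCoupling (p j) (q j) (ω j) (η j) = 0 := by
  obtain ⟨j, hj⟩ := not_forall.mp h
  refine prod_eq_zero (mem_univ j) ?_
  cases hω : ω j <;> cases hη : η j <;> simp_all [monotoneCoupling]

variable [PartialOrder R] [IsOrderedRing R]

lemma monotoneCoupling_nonneg {a b : R} (ha : 0 ≤ a) (hab : a ≤ b) (hb : b ≤ 1) (x y : Bool) :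
    0 ≤ monotoneCoupling a b x y := by
  cases x <;> cases y <;> simp [monotoneCoupling, ha, hab, hb]

theorem monotoneOn_bernoulliExpectation [DecidableEq ι] [AddCommGroup E] [PartialOrder E]
    [IsOrderedAddMonoid E] [Module R E] [PosSMulMono R E] {g : (ι → Bool) → E} (hg : Monotone g) :
    MonotoneOn (fun p : ι → R ↦ bernoulliExpectation p g) (Set.Icc 0 1) := by
  intro p hp q hq hpq
  let K (ω η : ι → Bool) : R := ∏ j, monotoneCoupling (p j) (q j) (ω j) (η j)
  have hK_smul (ω η : ι → Bool) : K ω η • g ω ≤ K ω η • g η := by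
    by_cases h : ω ≤ η
    · exact smul_le_smul_of_nonneg_left (hg h) <|
        prod_nonneg fun j _ ↦ monotoneCoupling_nonneg (hp.1 j) (hpq j) (hq.2 j) _ _
    · simp only [K, prod_monotoneCoupling_eq_zero_of_not_le h, zero_smul, le_refl]
  calc bernoulliExpectation p g
      = ∑ ω, ∑ η, K ω η • g ω := by
        simp only [K, ← sum_smul, sum_prod_monotoneCoupling_right, bernoulliExpectation]
    _ ≤ ∑ ω, ∑ η, K ω η • g η :=
        sum_le_sum fun ω _ ↦ sum_le_sum fun η _ ↦ hK_smul ω η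
    _ = bernoulliExpectation q g := by
        rw [sum_comm]
        simp only [K, ← sum_smul, sum_prod_monotoneCoupling_left, bernoulliExpectation]

end BernoulliExpectation

section SelectionMatrix

variable {m n α : Type*} [DecidableEq m]

/-- The diagonal 0-1 matrix of `s`: multiplying an observation matrix by it on the left replaces by
zero the rows of the measurements `i` with `s i = false`, which are those that are lost. -/
def selectionMatrix (α : Type*) [Zero α] [One α] (s : m → Bool) : Matrix m m α :=
  diagonal fun i ↦ if s i then 1 else 0

variable [Fintype m] [NonAssocSemiring α]

lemma selectionMatrix_mul_apply (s : m → Bool) (C : Matrix m n α) (i : m) (j : n) :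
    (selectionMatrix α s * C) i j = if s i then C i j else 0 := by
  rw [selectionMatrix, diagonal_mul, ite_mul, one_mul, zero_mul]

lemma selectionMatrix_mul_of_le {s t : m → Bool} (h : s ≤ t) :
    selectionMatrix α s * selectionMatrix α t = selectionMatrix α s := by
  simp only [selectionMatrix, diagonal_mul_diagonal]
  congr! 2 with i
  have hi : s i = true → t i = true := h i
  cases hs : s i <;> simp_all

end SelectionMatrix

section KalmanCorrection

variable {k l m n 𝕜 : Type*} [RCLike 𝕜]

lemma mul_mul_conjTranspose_mono [Finite l] [Fintype n] (B : Matrix l n 𝕜) :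
    Monotone fun P : Matrix n n 𝕜 ↦ B * P * Bᴴ := by
  intro P P' h
  rw [Matrix.le_iff, ← Matrix.sub_mul, ← Matrix.mul_sub]
  exact (Matrix.le_iff.mp h).mul_mul_conjTranspose_same B

instance matrix_posSMulMono : PosSMulMono ℝ (Matrix n n 𝕜) where
  smul_le_smul_of_nonneg_left c hc P P' h := by
    rw [Matrix.le_iff, ← smul_sub]
    exact (Matrix.le_iff.mp h).smul hc

lemma conjTranspose_mul_inv_mul_le_inv [Fintype k] [DecidableEq k] [Fintype m] [DecidableEq m]
    {S : Matrix m m 𝕜} {T : Matrix k k 𝕜} {L : Matrix k m 𝕜} (hS : S.PosDef) (hT : T.PosDef)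
    (h : L * S * Lᴴ ≤ T) : Lᴴ * T⁻¹ * L ≤ S⁻¹ := by
  let := hS.isUnit.invertible
  let := hS.inv.isUnit.invertible
  let := hT.isUnit.invertible
  have schur_S : (fromBlocks S⁻¹ Lᴴ L T).PosSemidef ↔ (T - L * S * Lᴴ).PosSemidef := by
    simpa only [conjTranspose_conjTranspose, inv_inv_of_invertible] using
      hS.inv.fromBlocks₁₁ Lᴴ T
  have schur_T : (fromBlocks S⁻¹ Lᴴ L T).PosSemidef ↔ (S⁻¹ - Lᴴ * T⁻¹ * L).PosSemidef := by
    simpa only [conjTranspose_conjTranspose] using hT.fromBlocks₂₂ S⁻¹ Lᴴ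
  exact schur_T.mp (schur_S.mpr h)

/-- The covariance reduction `A X Cᴴ (C X Cᴴ + R)⁻¹ C X Aᴴ` achieved in one step of the Kalman
filter by a measurement with observation matrix `C` and noise covariance `R`, when `X` is the prior
error covariance and `A` the state transition matrix. -/
noncomputable def kalmanCorrection [Fintype m] [DecidableEq m] [Fintype n] (A : Matrix l n 𝕜)
    (X : Matrix n n 𝕜) (R : Matrix m m 𝕜) (C : Matrix m n 𝕜) : Matrix l l 𝕜 :=
  A * X * Cᴴ * (C * X * Cᴴ + R)⁻¹ * C * X * Aᴴ

theorem kalmanCorrection_mul_le [Finite l] [Fintype k] [DecidableEq k] [Fintype m] [DecidableEq m]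
    [Fintype n] (A : Matrix l n 𝕜) {X : Matrix n n 𝕜} (hX : X.PosSemidef) {R : Matrix m m 𝕜}
    (hR : R.PosDef) {R' : Matrix k k 𝕜} (hR' : R'.PosDef) {L : Matrix k m 𝕜}
    (hL : L * R * Lᴴ ≤ R') (C : Matrix m n 𝕜) :
    kalmanCorrection A X R' (L * C) ≤ kalmanCorrection A X R C := by
  have hS : (C * X * Cᴴ + R).PosDef :=
    .posSemidef_add (hX.mul_mul_conjTranspose_same C) hR
  have hS' : (L * C * X * (L * C)ᴴ + R').PosDef :=
    .posSemidef_add (hX.mul_mul_conjTranspose_same (L * C)) hR'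
  have hSS' : L * (C * X * Cᴴ + R) * Lᴴ ≤ L * C * X * (L * C)ᴴ + R' := by
    simpa only [Matrix.mul_add, Matrix.add_mul, conjTranspose_mul, Matrix.mul_assoc,
      add_le_add_iff_left] using hL
  have hconj := mul_mul_conjTranspose_mono (A * X * Cᴴ)
    (conjTranspose_mul_inv_mul_le_inv hS hS' hSS')
  simpa only [kalmanCorrection, conjTranspose_mul, conjTranspose_conjTranspose, hX.isHermitian.eq,
    Matrix.mul_assoc] using hconj

variable [Fintype m] [DecidableEq m]

lemma selectionMatrix_mul_diagonal_mul_le {r : m → 𝕜} (hr : 0 ≤ r) (s : m → Bool) :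
    selectionMatrix 𝕜 s * diagonal r * (selectionMatrix 𝕜 s)ᴴ ≤ diagonal r := by
  rw [Matrix.le_iff]
  simp only [selectionMatrix, diagonal_conjTranspose, diagonal_mul_diagonal, diagonal_sub]
  refine .diagonal fun i ↦ ?_
  have hri : 0 ≤ r i := hr i
  cases hs : s i <;> simp [hs, hri]

theorem kalmanCorrection_selectionMatrix_mono [Finite l] [Fintype n] (A : Matrix l n 𝕜)
    {X : Matrix n n 𝕜} (hX : X.PosSemidef) {r : m → 𝕜} (hr : ∀ i, 0 < r i) (C : Matrix m n 𝕜) :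
    Monotone fun s ↦ kalmanCorrection A X (diagonal r) (selectionMatrix 𝕜 s * C) := by
  intro s t hst
  have hR : (diagonal r).PosDef := .diagonal hr
  have hL : selectionMatrix 𝕜 s * diagonal r * (selectionMatrix 𝕜 s)ᴴ ≤ diagonal r :=
    selectionMatrix_mul_diagonal_mul_le (fun i ↦ (hr i).le) s
  have hle := kalmanCorrection_mul_le A hX hR hR hL (selectionMatrix 𝕜 t * C)
  rwa [← Matrix.mul_assoc, selectionMatrix_mul_of_le hst] at hle

theorem expected_kalman_correction_monotone_in_reception_probabilities_general
    {ι : Type*} [Fintype ι] [DecidableEq ι] [Finite l] [Fintype n] (A : Matrix l n 𝕜)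
    {X : Matrix n n 𝕜} (hX : X.PosSemidef) (C : Matrix m n 𝕜) {r : m → 𝕜} (hr : ∀ i, 0 < r i)
    {θ : m → (ι → Bool) → Bool} (hθ : ∀ i, Monotone (θ i)) {D : (ι → Bool) → Matrix m n 𝕜}
    (hD : ∀ ω i j, D ω i j = if θ i ω then C i j else 0) :
    MonotoneOn (fun p : ι → ℝ ↦
      bernoulliExpectation p fun ω ↦ kalmanCorrection A X (diagonal r) (D ω)) (Set.Icc 0 1) := by
  have hD_eq (ω : ι → Bool) : D ω = selectionMatrix 𝕜 (fun i ↦ θ i ω) * C := by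
    ext i j
    rw [selectionMatrix_mul_apply, hD]
  simp only [hD_eq]
  exact monotoneOn_bernoulliExpectation fun _ _ hω ↦
    kalmanCorrection_selectionMatrix_mono A hX hr C fun i ↦ hθ i hω

end KalmanCorrection

/-- Monotonicity of the expected Kalman correction term (hence of the one-step expected
error covariance) in the packet reception probabilities, for monotone Boolean
reconstruction indicators `θ i` (Lemma 1, general form). -/
theorem expected_kalman_correction_monotone_in_reception_probabilities
    (n M N : ℕ) (hn : 0 < n) (hM : 0 < M) (hN : 0 < N)
    (A : Matrix (Fin n) (Fin n) ℝ)
    (X : Matrix (Fin n) (Fin n) ℝ) (hX : X.PosSemidef)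
    (C : Fin M → Fin n → ℝ)
    (r : Fin M → ℝ) (hr : ∀ i, 0 < r i)
    (θ : Fin M → (Fin N → Bool) → Bool)
    (hθ : ∀ i, Monotone (θ i))
    (Q : Matrix (Fin n) (Fin n) ℝ) (hQ : Q.IsSymm)
    (p q : Fin N → ℝ)
    (hp : ∀ j, p j ∈ Set.Icc (0 : ℝ) 1) (hq : ∀ j, q j ∈ Set.Icc (0 : ℝ) 1)
    (hpq : ∀ j, p j ≤ q j)
    -- the product Bernoulli weight μ_v(ω) = ∏_j v_j^{ω_j} (1-v_j)^{1-ω_j}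
    (μ : (Fin N → ℝ) → (Fin N → Bool) → ℝ)
    (hμ : ∀ v ω, μ v ω = ∏ j, if ω j then v j else 1 - v j)
    -- C(ω) is the M×n matrix whose i-th row is θ_i(ω)·C_i
    (Cmat : (Fin N → Bool) → Matrix (Fin M) (Fin n) ℝ)
    (hCmat : ∀ ω i j, Cmat ω i j = if θ i ω then C i j else 0)
    -- the expected correction term T_v(X)
    (T : (Fin N → ℝ) → Matrix (Fin n) (Fin n) ℝ)
    (hT : ∀ v, T v = ∑ ω : Fin N → Bool, μ v ω •
      (A * X * (Cmat ω)ᵀ * (Cmat ω * X * (Cmat ω)ᵀ + Matrix.diagonal r)⁻¹ *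
        Cmat ω * X * Aᵀ))
    -- the one-step expected error covariance f_v(X)
    (f : (Fin N → ℝ) → Matrix (Fin n) (Fin n) ℝ)
    (hf : ∀ v, f v = A * X * Aᵀ + Q - T v) :
    (T q - T p).PosSemidef ∧ (f p - f q).PosSemidef := by
  have hT_sub : (T q - T p).PosSemidef := by
    simpa only [hT, hμ, bernoulliExpectation, bernoulliWeight, kalmanCorrection, Matrix.le_iff,
      conjTranspose_eq_transpose_of_trivial] using
      expected_kalman_correction_monotone_in_reception_probabilities_general A hX C hr hθ hCmat
        ⟨fun j ↦ (hp j).1, fun j ↦ (hp j).2⟩ ⟨fun j ↦ (hq j).1, fun j ↦ (hq j).2⟩ hpq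
  have hf_sub : f p - f q = T q - T p := by
    rw [hf, hf, sub_sub_sub_cancel_left]
  exact ⟨hT_sub, hf_sub ▸ hT_sub⟩
end

section
/- Monotonicity of Kalman filter performance in sensor signal-to-noise ratios (Lemma 2): Let n, M be positive integers, A an n×n real matrix, X a positive definite n×n real matrix, and let μ be any probability distribution on {0,1}^M (weights μ(ω) ≥ 0 summing to 1). Let C_1,…,C_M and D_1,…,D_M be row vectors in ℝ^{1×n}, and r_1,…,r_M, s_1,…,s_M positive reals, such that for a fixed index i one has C_j = D_j and r_j = s_j for all j ≠ i, and the n×n matrix (1/r_i) C_i^T C_i − (1/s_i) D_i^T D_i is negative semidefinite (i.e., C_i^T r_i^{−1} C_i ≤ D_i^T s_i^{−1} D_i in the Loewner order). Define f_C(X) = A X A^T + Q − Σ_{ω ∈ {0,1}^M} μ(ω) · A X C(ω)^T (C(ω) X C(ω)^T + R)^{−1} C(ω) X A^T, where C(ω) is the M×n matrix with i-th row ω_i·C_i and R = diag(r_1,…,r_M); define f_D(X) analogously using the rows D_i and S = diag(s_1,…,s_M). Then f_C(X) − f_D(X) is positive semidefinite, i.e., f_C(X) ≥ f_D(X) in the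 Loewner order. -/
open Matrix Finset

/-!
Write `X = Bᴴ B` and `K = G Bᴴ`. By the Woodbury identity, the covariance removed by a measurement
`G` with noise covariance `R` is
`X Gᴴ (G X Gᴴ + R)⁻¹ G X = Bᴴ (1 - (1 + Kᴴ R⁻¹ K)⁻¹) B`, where `Kᴴ R⁻¹ K = B (Gᴴ R⁻¹ G) Bᴴ`.
Since inversion is antitone on positive definite matrices, it is monotone in the information matrix
`Gᴴ R⁻¹ G`. For uncorrelated sensors the latter is the sum of the signal-to-noise ratios of the
sensors received, so it is monotone in each of them.
-/

section

open scoped ComplexOrder MatrixOrder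

variable {𝕜 m n ι κ Ω : Type*} [RCLike 𝕜]

/-- The matrix-valued signal-to-noise ratio `cᴴ ρ⁻¹ c` of a scalar sensor with measurement row `c`
and noise variance `ρ`. -/
def sensorSNR (c : n → 𝕜) (ρ : 𝕜) : Matrix n n 𝕜 :=
  ρ⁻¹ • vecMulVec (star c) c

/-- The observation matrix left at the gateway when exactly the measurements `k` with `ω k = true`
are reconstructed: the row of a lost measurement becomes zero. -/
def receivedRows (C : Matrix ι n 𝕜) (ω : ι → Bool) : Matrix ι n 𝕜 :=
  of fun k ↦ if ω k then C k else 0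

theorem eq_receivedRows {C : Matrix ι n 𝕜} {G : (ι → Bool) → Matrix ι n 𝕜}
    (hG : ∀ ω k j, G ω k j = if ω k then C k j else 0) : G = receivedRows C := by
  ext ω k j
  rw [hG, receivedRows, of_apply, ite_apply, Pi.zero_apply]

theorem sensorSNR_le_of_eq_of_ne {C D : Matrix ι n 𝕜} {r s : ι → 𝕜} {i : ι}
    (hne : ∀ j, j ≠ i → C j = D j ∧ r j = s j)
    (hi : sensorSNR (C i) (r i) ≤ sensorSNR (D i) (s i)) (k : ι) :
    sensorSNR (C k) (r k) ≤ sensorSNR (D k) (s k) := by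
  obtain rfl | hk := eq_or_ne k i
  · exact hi
  · rw [(hne k hk).1, (hne k hk).2]

variable [Fintype ι] [Fintype κ] [Fintype Ω] [DecidableEq ι] [DecidableEq κ]

/-- The information matrix `Gᴴ R⁻¹ G` of a measurement with observation matrix `G` and noise
covariance `R`. -/
noncomputable def informationMatrix (G : Matrix ι n 𝕜) (R : Matrix ι ι 𝕜) : Matrix n n 𝕜 :=
  Gᴴ * R⁻¹ * G

theorem posSemidef_informationMatrix [Finite n] (G : Matrix ι n 𝕜) {R : Matrix ι ι 𝕜}
    (hR : R.PosDef) : (informationMatrix G R).PosSemidef :=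
  hR.inv.posSemidef.conjTranspose_mul_mul_same G

theorem informationMatrix_diagonal (G : Matrix ι n 𝕜) {r : ι → 𝕜} (hr : ∀ k, r k ≠ 0) :
    informationMatrix G (diagonal r) = ∑ k, sensorSNR (G k) (r k) := by
  have hinv : (diagonal r)⁻¹ = diagonal fun k ↦ (r k)⁻¹ := by
    refine inv_eq_right_inv ?_
    simp only [diagonal_mul_diagonal, mul_inv_cancel₀ (hr _), diagonal_one]
  ext a b
  rw [informationMatrix, hinv, mul_apply, Matrix.sum_apply]
  refine sum_congr rfl fun k _ ↦ ?_
  rw [mul_diagonal, conjTranspose_apply, sensorSNR, Matrix.smul_apply, vecMulVec_apply,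
    Pi.star_apply, smul_eq_mul]
  ring

theorem informationMatrix_receivedRows_mono {C D : Matrix ι n 𝕜} {r s : ι → 𝕜}
    (hr : ∀ k, r k ≠ 0) (hs : ∀ k, s k ≠ 0)
    (h : ∀ k, sensorSNR (C k) (r k) ≤ sensorSNR (D k) (s k)) (ω : ι → Bool) :
    informationMatrix (receivedRows C ω) (diagonal r) ≤
      informationMatrix (receivedRows D ω) (diagonal s) := by
  rw [informationMatrix_diagonal _ hr, informationMatrix_diagonal _ hs]
  refine sum_le_sum fun k _ ↦ ?_
  have hrow (E : Matrix ι n 𝕜) : receivedRows E ω k = if ω k then E k else 0 := rfl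
  rw [hrow, hrow]
  split
  · exact h k
  · simp only [sensorSNR, vecMulVec_zero, smul_zero, le_refl]

variable [Fintype n]

theorem mul_mul_conjTranspose_mono_s1 [Finite m] (A : Matrix m n 𝕜) {P Q : Matrix n n 𝕜}
    (h : P ≤ Q) : A * P * Aᴴ ≤ A * Q * Aᴴ := by
  rw [Matrix.le_iff, ← Matrix.sub_mul, ← Matrix.mul_sub]
  exact (Matrix.le_iff.mp h).mul_mul_conjTranspose_same A

-- `P ≤ Q` and `Q⁻¹ ≤ P⁻¹` are the nonnegativity of the two Schur complements of `[Q 1; 1 P⁻¹]`.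
theorem inv_anti_of_posDef [DecidableEq n] {P Q : Matrix n n 𝕜} (hP : P.PosDef) (hQ : Q.PosDef)
    (h : P ≤ Q) : Q⁻¹ ≤ P⁻¹ := by
  have := hQ.isUnit.invertible
  have := hP.inv.isUnit.invertible
  have hPP : P⁻¹⁻¹ = P := nonsing_inv_nonsing_inv P ((isUnit_iff_isUnit_det P).mp hP.isUnit)
  have hblocks : (fromBlocks Q 1 1ᴴ P⁻¹).PosSemidef := by
    rw [PosDef.fromBlocks₂₂ Q 1 hP.inv]
    simpa only [conjTranspose_one, Matrix.one_mul, Matrix.mul_one, hPP] using Matrix.le_iff.mp h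
  simpa only [conjTranspose_one, Matrix.one_mul, Matrix.mul_one, Matrix.le_iff] using
    (PosDef.fromBlocks₁₁ 1 P⁻¹ hQ).mp hblocks

theorem inv_one_add_conjTranspose_mul_inv_mul [DecidableEq n] (K : Matrix ι n 𝕜)
    {R : Matrix ι ι 𝕜} (hR : R.PosDef) :
    (1 + Kᴴ * R⁻¹ * K)⁻¹ = 1 - Kᴴ * (K * Kᴴ + R)⁻¹ * K := by
  have hRR : R⁻¹⁻¹ = R := nonsing_inv_nonsing_inv R ((isUnit_iff_isUnit_det R).mp hR.isUnit)
  have hunit : IsUnit (R⁻¹⁻¹ + K * (1 : Matrix n n 𝕜)⁻¹ * Kᴴ) := by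
    rw [hRR, inv_one, Matrix.mul_one]
    exact (hR.add_posSemidef (posSemidef_self_mul_conjTranspose K)).isUnit
  simpa only [hRR, inv_one, Matrix.one_mul, Matrix.mul_one, add_comm R] using
    add_mul_mul_inv_eq_sub 1 Kᴴ R⁻¹ K isUnit_one hR.inv.isUnit hunit

/-- The amount by which the Kalman measurement update with observation matrix `G` and noise
covariance `R` lowers the error covariance `X`. -/
noncomputable def covReduction (X : Matrix n n 𝕜) (G : Matrix ι n 𝕜) (R : Matrix ι ι 𝕜) :
    Matrix n n 𝕜 :=
  X * Gᴴ * (G * X * Gᴴ + R)⁻¹ * G * X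

theorem covReduction_conjTranspose_mul_self [DecidableEq n] (B : Matrix n n 𝕜) (G : Matrix ι n 𝕜)
    {R : Matrix ι ι 𝕜} (hR : R.PosDef) :
    covReduction (Bᴴ * B) G R = Bᴴ * (1 - (1 + B * informationMatrix G R * Bᴴ)⁻¹) * B := by
  have hinfo : B * informationMatrix G R * Bᴴ = (G * Bᴴ)ᴴ * R⁻¹ * (G * Bᴴ) := by
    simp only [informationMatrix, conjTranspose_mul, conjTranspose_conjTranspose, Matrix.mul_assoc]
  rw [hinfo, inv_one_add_conjTranspose_mul_inv_mul _ hR, sub_sub_cancel, covReduction]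
  simp only [conjTranspose_mul, conjTranspose_conjTranspose, Matrix.mul_assoc]

theorem covReduction_mono {X : Matrix n n 𝕜} (hX : X.PosSemidef)
    {G : Matrix ι n 𝕜} {R : Matrix ι ι 𝕜} {H : Matrix κ n 𝕜} {S : Matrix κ κ 𝕜}
    (hR : R.PosDef) (hS : S.PosDef) (h : informationMatrix G R ≤ informationMatrix H S) :
    covReduction X G R ≤ covReduction X H S := by
  classical
  obtain ⟨B, rfl⟩ := CStarAlgebra.nonneg_iff_eq_star_mul_self.mp hX.nonneg
  have hpos {J : Matrix n n 𝕜} (hJ : J.PosSemidef) : (1 + B * J * Bᴴ).PosDef :=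
    PosDef.one.add_posSemidef (hJ.mul_mul_conjTranspose_same B)
  have hinv : (1 + B * informationMatrix H S * Bᴴ)⁻¹ ≤ (1 + B * informationMatrix G R * Bᴴ)⁻¹ :=
    inv_anti_of_posDef (hpos (posSemidef_informationMatrix G hR))
      (hpos (posSemidef_informationMatrix H hS))
      (add_le_add_right (mul_mul_conjTranspose_mono_s1 B h) 1)
  rw [star_eq_conjTranspose, covReduction_conjTranspose_mul_self B G hR,
    covReduction_conjTranspose_mul_self B H hS]
  simpa only [conjTranspose_conjTranspose] using
    mul_mul_conjTranspose_mono_s1 Bᴴ (sub_le_sub_left hinv 1)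

/-- The expected error covariance after a measurement update of `X` with random observation matrix
`G ω`, where outcome `ω` has probability `μ ω`, followed by a prediction step with transition matrix
`A` and process noise covariance `Q`. -/
noncomputable def expectedErrorCov (A : Matrix m n 𝕜) (Q : Matrix m m 𝕜) (X : Matrix n n 𝕜)
    (μ : Ω → ℝ) (G : Ω → Matrix ι n 𝕜) (R : Matrix ι ι 𝕜) : Matrix m m 𝕜 :=
  A * X * Aᴴ + Q - ∑ ω, μ ω • (A * covReduction X (G ω) R * Aᴴ)

theorem expectedErrorCov_anti [Finite m] (A : Matrix m n 𝕜) (Q : Matrix m m 𝕜)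
    {X : Matrix n n 𝕜} (hX : X.PosSemidef) {μ : Ω → ℝ} (hμ : ∀ ω, 0 ≤ μ ω)
    {G : Ω → Matrix ι n 𝕜} {R : Matrix ι ι 𝕜} {H : Ω → Matrix κ n 𝕜} {S : Matrix κ κ 𝕜}
    (hR : R.PosDef) (hS : S.PosDef)
    (h : ∀ ω, informationMatrix (G ω) R ≤ informationMatrix (H ω) S) :
    expectedErrorCov A Q X μ H S ≤ expectedErrorCov A Q X μ G R := by
  cases nonempty_fintype m
  refine sub_le_sub_left (sum_le_sum fun ω _ ↦ smul_le_smul_of_nonneg_left ?_ (hμ ω)) _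
  exact mul_mul_conjTranspose_mono_s1 A (covReduction_mono hX hR hS (h ω))

theorem expectedErrorCov_eq_of_real (A : Matrix m n ℝ) (Q : Matrix m m ℝ) (X : Matrix n n ℝ)
    (μ : Ω → ℝ) (G : Ω → Matrix ι n ℝ) (R : Matrix ι ι ℝ) :
    expectedErrorCov A Q X μ G R = A * X * Aᵀ + Q - ∑ ω, μ ω •
      (A * X * (G ω)ᵀ * (G ω * X * (G ω)ᵀ + R)⁻¹ * G ω * X * Aᵀ) := by
  simp only [expectedErrorCov, covReduction, conjTranspose_eq_transpose_of_trivial,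
    Matrix.mul_assoc]

theorem expected_kalman_covariance_monotone_in_snr_general [Finite m] (A : Matrix m n 𝕜)
    (Q : Matrix m m 𝕜) {X : Matrix n n 𝕜} (hX : X.PosSemidef)
    {μ : (ι → Bool) → ℝ} (hμ : ∀ ω, 0 ≤ μ ω) {C D : Matrix ι n 𝕜} {r s : ι → 𝕜}
    (hr : ∀ k, 0 < r k) (hs : ∀ k, 0 < s k)
    (hSNR : ∀ k, sensorSNR (C k) (r k) ≤ sensorSNR (D k) (s k)) :
    expectedErrorCov A Q X μ (receivedRows D) (diagonal s) ≤
      expectedErrorCov A Q X μ (receivedRows C) (diagonal r) :=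
  expectedErrorCov_anti A Q hX hμ (.diagonal hr) (.diagonal hs)
    (informationMatrix_receivedRows_mono (fun k ↦ (hr k).ne') (fun k ↦ (hs k).ne') hSNR)

end

/-- Monotonicity of the one-step expected Kalman error covariance in a single sensor's
signal-to-noise ratio `Cᵢᵀ rᵢ⁻¹ Cᵢ` (Lemma 2). -/
theorem expected_kalman_covariance_monotone_in_snr
    (n M : ℕ) (hn : 0 < n) (hM : 0 < M)
    (A : Matrix (Fin n) (Fin n) ℝ)
    (X : Matrix (Fin n) (Fin n) ℝ) (hX : X.PosDef)
    -- μ is a probability distribution on {0,1}^M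
    (μ : (Fin M → Bool) → ℝ) (hμ0 : ∀ ω, 0 ≤ μ ω) (hμ1 : ∑ ω, μ ω = 1)
    (C D : Fin M → Fin n → ℝ)
    (r s : Fin M → ℝ) (hr : ∀ i, 0 < r i) (hs : ∀ i, 0 < s i)
    (i : Fin M)
    (hCD : ∀ j, j ≠ i → C j = D j ∧ r j = s j)
    -- Cᵢᵀ rᵢ⁻¹ Cᵢ ≤ Dᵢᵀ sᵢ⁻¹ Dᵢ in the Loewner order
    (hSNR : ((s i)⁻¹ • Matrix.vecMulVec (D i) (D i) -
      (r i)⁻¹ • Matrix.vecMulVec (C i) (C i)).PosSemidef)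
    (Q : Matrix (Fin n) (Fin n) ℝ)
    -- C(ω) has i-th row ωᵢ·Cᵢ, and analogously D(ω)
    (CM DM : (Fin M → Bool) → Matrix (Fin M) (Fin n) ℝ)
    (hCM : ∀ ω k j, CM ω k j = if ω k then C k j else 0)
    (hDM : ∀ ω k j, DM ω k j = if ω k then D k j else 0)
    (fC fD : Matrix (Fin n) (Fin n) ℝ)
    (hfC : fC = A * X * Aᵀ + Q - ∑ ω : Fin M → Bool, μ ω •
      (A * X * (CM ω)ᵀ * (CM ω * X * (CM ω)ᵀ + Matrix.diagonal r)⁻¹ * CM ω * X * Aᵀ))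
    (hfD : fD = A * X * Aᵀ + Q - ∑ ω : Fin M → Bool, μ ω •
      (A * X * (DM ω)ᵀ * (DM ω * X * (DM ω)ᵀ + Matrix.diagonal s)⁻¹ * DM ω * X * Aᵀ)) :
    (fC - fD).PosSemidef := by
  rw [hfC, hfD, eq_receivedRows hCM, eq_receivedRows hDM, ← expectedErrorCov_eq_of_real,
    ← expectedErrorCov_eq_of_real]
  exact expected_kalman_covariance_monotone_in_snr_general A Q hX.posSemidef hμ0 hr hs
    (sensorSNR_le_of_eq_of_ne hCD hSNR)
end

section
/- Threshold condition for the XOR operation to beat forwarding y₁ (conditions (13) and (15)): Let a ≠ 0, P > 0, s₁ > 0, s₂ > 0, λ₁ ∈ [0,1], λ₂ ∈ [0,1), and q ∈ ℝ. Define E_XOR = a²P + q − (λ₁ + λ₂ − λ₁λ₂) a²P²/(P + 1/(s₁+s₂)) and E_F1 = a²P + q − λ₂ a²P²/(P + 1/(s₁+s₂)) − (1−λ₂) a²P²/(P + 1/s₁). Then the following are equivalent: (i) E_XOR < E_F1; (ii) λ₁(1−λ₂)/(P + 1/(s₁+s₂)) > (1−λ₂)/(P + 1/s₁); (iii) λ₁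 > (P + 1/(s₁+s₂))/(P + 1/s₁); (iv) λ₁/s₁ − 1/(s₁+s₂) > P(1−λ₁). -/
/-!
If `y₂` reaches the gateway directly, both relay policies deliver both measurements. If it does
not, which has probability `1 - lam₂`, then forwarding delivers `y₁` for certain, while the XOR
delivers both measurements with probability `lam₁` and nothing otherwise. So the XOR wins exactly
when `lam₁` times the variance reduction from both measurements exceeds the reduction from `y₁`
alone. These reductions are inversely proportional to `P + 1 / (s₁ + s₂)` and `P + 1 / s₁`, which
turns the comparison into `P + 1 / (s₁ + s₂) < lam₁ * (P + 1 / s₁)`.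
-/

theorem sub_xor_reduction_lt_sub_forward_reduction_iff {R : Type*} [CommRing R] [LinearOrder R]
    [IsStrictOrderedRing R] {E lam₁ lam₂ g₁ g₁₂ : R} (h₂ : lam₂ < 1) :
    E - (lam₁ + lam₂ - lam₁ * lam₂) * g₁₂ < E - lam₂ * g₁₂ - (1 - lam₂) * g₁ ↔
      g₁ < lam₁ * g₁₂ := by
  have gap : E - lam₂ * g₁₂ - (1 - lam₂) * g₁ - (E - (lam₁ + lam₂ - lam₁ * lam₂) * g₁₂) =
      (1 - lam₂) * (lam₁ * g₁₂ - g₁) := by ring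
  rw [← sub_pos, gap, mul_pos_iff_of_pos_left (sub_pos.2 h₂), sub_pos]

section OrderedField

variable {K : Type*} [Field K] [LinearOrder K] [IsStrictOrderedRing K]

theorem div_lt_mul_div_iff_lt_mul {c k x y : K} (hk : 0 < k) (hx : 0 < x) (hy : 0 < y) :
    k / x < c * k / y ↔ y < c * x := by
  rw [div_lt_div_iff₀ hx hy, mul_right_comm, mul_comm k y, mul_lt_mul_iff_left₀ hk]

theorem mul_one_sub_lt_div_sub_one_div_iff {c p s t : K} :
    p * (1 - c) < c / s - 1 / t ↔ p + 1 / t < c * (p + 1 / s) := by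
  have same_gap : c / s - 1 / t - p * (1 - c) = c * (p + 1 / s) - (p + 1 / t) := by ring
  rw [← sub_pos, same_gap, sub_pos]

theorem xor_beats_forwarding_y1_iff_general {a P s₁ s₂ lam₁ lam₂ q EXOR EF1 : K}
    (ha : a ≠ 0) (hP : 0 < P) (hs₁ : 0 < s₁) (hs₂ : 0 < s₂) (h₂ : lam₂ < 1)
    (hEXOR : EXOR = a ^ 2 * P + q -
      (lam₁ + lam₂ - lam₁ * lam₂) * a ^ 2 * P ^ 2 / (P + 1 / (s₁ + s₂)))
    (hEF1 : EF1 = a ^ 2 * P + q - lam₂ * a ^ 2 * P ^ 2 / (P + 1 / (s₁ + s₂)) -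
      (1 - lam₂) * a ^ 2 * P ^ 2 / (P + 1 / s₁)) :
    (EXOR < EF1 ↔
      lam₁ * (1 - lam₂) / (P + 1 / (s₁ + s₂)) > (1 - lam₂) / (P + 1 / s₁)) ∧
    (EXOR < EF1 ↔ lam₁ > (P + 1 / (s₁ + s₂)) / (P + 1 / s₁)) ∧
    (EXOR < EF1 ↔ lam₁ / s₁ - 1 / (s₁ + s₂) > P * (1 - lam₁)) := by
  have both_pos : 0 < P + 1 / (s₁ + s₂) := by positivity
  have first_pos : 0 < P + 1 / s₁ := by positivity
  have scale_pos : 0 < a ^ 2 * P ^ 2 := by positivity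
  have xor_lt_iff : EXOR < EF1 ↔ P + 1 / (s₁ + s₂) < lam₁ * (P + 1 / s₁) := by
    simp only [mul_assoc _ (a ^ 2) (P ^ 2), mul_div_assoc _ (a ^ 2 * P ^ 2)] at hEXOR hEF1
    rw [hEXOR, hEF1, sub_xor_reduction_lt_sub_forward_reduction_iff h₂, ← mul_div_assoc,
      div_lt_mul_div_iff_lt_mul scale_pos first_pos both_pos]
  exact ⟨xor_lt_iff.trans (div_lt_mul_div_iff_lt_mul (sub_pos.2 h₂) first_pos both_pos).symm,
    xor_lt_iff.trans (div_lt_iff₀ first_pos).symm,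
    xor_lt_iff.trans mul_one_sub_lt_div_sub_one_div_iff.symm⟩

end OrderedField

/-- Threshold condition for the XOR operation to beat forwarding y₁
(conditions (13) and (15)): the XOR relay operation yields a strictly smaller one-step
expected error covariance than forwarding y₁ exactly when λ₁ exceeds the stated
threshold. -/
theorem xor_beats_forwarding_y1_iff
    (a P s₁ s₂ lam₁ lam₂ q : ℝ)
    (ha : a ≠ 0) (hP : 0 < P) (hs₁ : 0 < s₁) (hs₂ : 0 < s₂)
    (h₁ : lam₁ ∈ Set.Icc (0 : ℝ) 1) (h₂ : lam₂ ∈ Set.Ico (0 : ℝ) 1)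
    (EXOR EF1 : ℝ)
    (hEXOR : EXOR = a ^ 2 * P + q -
      (lam₁ + lam₂ - lam₁ * lam₂) * a ^ 2 * P ^ 2 / (P + 1 / (s₁ + s₂)))
    (hEF1 : EF1 = a ^ 2 * P + q - lam₂ * a ^ 2 * P ^ 2 / (P + 1 / (s₁ + s₂)) -
      (1 - lam₂) * a ^ 2 * P ^ 2 / (P + 1 / s₁)) :
    (EXOR < EF1 ↔
      lam₁ * (1 - lam₂) / (P + 1 / (s₁ + s₂)) > (1 - lam₂) / (P + 1 / s₁)) ∧
    (EXOR < EF1 ↔ lam₁ > (P + 1 / (s₁ + s₂)) / (P + 1 / s₁)) ∧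
    (EXOR < EF1 ↔ lam₁ / s₁ - 1 / (s₁ + s₂) > P * (1 - lam₁)) :=
  xor_beats_forwarding_y1_iff_general ha hP hs₁ hs₂ h₂.2 hEXOR hEF1
end

section
/- Threshold condition for the XOR operation to beat forwarding y₂ (conditions (14) and (16)): Let a ≠ 0, P > 0, s₁ > 0, s₂ > 0, λ₁ ∈ [0,1), λ₂ ∈ [0,1], and q ∈ ℝ. Define E_XOR = a²P + q − (λ₁ + λ₂ − λ₁λ₂) a²P²/(P + 1/(s₁+s₂)) and E_F2 = a²P + q − λ₁ a²P²/(P + 1/(s₁+s₂)) − (1−λ₁) a²P²/(P + 1/s₂). Then the following are equivalent: (i) E_XOR < E_F2; (ii) λ₂ > (P + 1/(s₁+s₂))/(P + 1/s₂); (iii) λ₂/s₂ − 1/(s₁+s₂) > P(1−λ₂). -/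
/-!
If `y₁` reaches the gateway, both schemes deliver both measurements. Otherwise, with probability
`1 - λ₁`, XOR yields the joint gain `a² P² / (P + 1/(s₁+s₂))` with probability `λ₂` and nothing
else, while forwarding yields the gain `a² P² / (P + 1/s₂)` of `y₂` alone with certainty. So XOR
wins exactly when `λ₂` exceeds the ratio of the second gain to the first.
-/

section OrderedRing

variable {R : Type*} [CommRing R] [LinearOrder R] [IsStrictOrderedRing R]

theorem sub_add_sub_mul_mul_lt_sub_sub_iff {p : R} (hp : p < 1) (l c x y : R) :
    c - (p + l - p * l) * x < c - p * x - (1 - p) * y ↔ y < l * x := by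
  have union_eq : c - (p + l - p * l) * x = c - p * x - (1 - p) * (l * x) := by ring
  rw [union_eq, sub_lt_sub_iff_left, mul_lt_mul_iff_right₀ (sub_pos.2 hp)]

end OrderedRing

section OrderedField

variable {K : Type*} [Field K] [LinearOrder K] [IsStrictOrderedRing K]

theorem div_lt_mul_div_iff_div_lt {k A : K} (hk : 0 < k) (hA : 0 < A) (B l : K) :
    k / B < l * (k / A) ↔ A / B < l := by
  have factor_gain : k / B = A / B * (k / A) := by field_simp
  rw [factor_gain, mul_lt_mul_iff_left₀ (div_pos hk hA)]

theorem add_div_add_lt_iff_mul_one_sub_lt {P v : K} (hPv : 0 < P + v) (u l : K) :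
    (P + u) / (P + v) < l ↔ P * (1 - l) < l * v - u := by
  have margin_eq : l * v - u - P * (1 - l) = l * (P + v) - (P + u) := by ring
  rw [div_lt_iff₀ hPv, ← sub_pos, ← margin_eq, sub_pos]

/-- Here `u` and `v` are the effective noise variances of `(y₁, y₂)` jointly and of `y₂` alone,
which are `1 / (s₁ + s₂)` and `1 / s₂` in terms of the signal-to-noise ratios. -/
theorem xor_beats_forwarding_y2_iff_general
    {a P u v lam₁ : K} (lam₂ q : K)
    (ha : a ≠ 0) (hP : P ≠ 0) (hPu : 0 < P + u) (hPv : 0 < P + v) (h₁ : lam₁ < 1)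
    {EXOR EF2 : K}
    (hEXOR : EXOR = a ^ 2 * P + q - (lam₁ + lam₂ - lam₁ * lam₂) * a ^ 2 * P ^ 2 / (P + u))
    (hEF2 : EF2 = a ^ 2 * P + q - lam₁ * a ^ 2 * P ^ 2 / (P + u) -
      (1 - lam₁) * a ^ 2 * P ^ 2 / (P + v)) :
    (EXOR < EF2 ↔ lam₂ > (P + u) / (P + v)) ∧
    (EXOR < EF2 ↔ lam₂ * v - u > P * (1 - lam₂)) := by
  have gain_pos : 0 < a ^ 2 * P ^ 2 := by positivity
  have ratio_threshold : EXOR < EF2 ↔ (P + u) / (P + v) < lam₂ := by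
    rw [hEXOR, hEF2]
    simp only [mul_assoc _ (a ^ 2) (P ^ 2), mul_div_assoc _ (a ^ 2 * P ^ 2)]
    rw [sub_add_sub_mul_mul_lt_sub_sub_iff h₁, div_lt_mul_div_iff_div_lt gain_pos hPu]
  exact ⟨ratio_threshold, ratio_threshold.trans (add_div_add_lt_iff_mul_one_sub_lt hPv u lam₂)⟩

end OrderedField

/-- Threshold condition for the XOR operation to beat forwarding y₂
(conditions (14) and (16)): the XOR relay operation yields a strictly smaller one-step
expected error covariance than forwarding y₂ exactly when λ₂ exceeds the stated
threshold. -/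
theorem xor_beats_forwarding_y2_iff
    (a P s₁ s₂ lam₁ lam₂ q : ℝ)
    (ha : a ≠ 0) (hP : 0 < P) (hs₁ : 0 < s₁) (hs₂ : 0 < s₂)
    (h₁ : lam₁ ∈ Set.Ico (0 : ℝ) 1) (h₂ : lam₂ ∈ Set.Icc (0 : ℝ) 1)
    (EXOR EF2 : ℝ)
    (hEXOR : EXOR = a ^ 2 * P + q -
      (lam₁ + lam₂ - lam₁ * lam₂) * a ^ 2 * P ^ 2 / (P + 1 / (s₁ + s₂)))
    (hEF2 : EF2 = a ^ 2 * P + q - lam₁ * a ^ 2 * P ^ 2 / (P + 1 / (s₁ + s₂)) -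
      (1 - lam₁) * a ^ 2 * P ^ 2 / (P + 1 / s₂)) :
    (EXOR < EF2 ↔ lam₂ > (P + 1 / (s₁ + s₂)) / (P + 1 / s₂)) ∧
    (EXOR < EF2 ↔ lam₂ / s₂ - 1 / (s₁ + s₂) > P * (1 - lam₂)) := by
  rw [div_eq_mul_one_div lam₂ s₂]
  exact xor_beats_forwarding_y2_iff_general lam₂ q ha hP.ne' (by positivity) (by positivity)
    h₁.2 hEXOR hEF2
end

section
/- At high signal-to-noise ratios the XOR operation cannot beat both forwarding options: Let λ₁, λ₂ ∈ [0,1) and P > 0. Then there exists S > 0 such that for all s₁ > 0 and s₂ > 0 with s₁ ≥ S or s₂ ≥ S, the two conditions λ₁/s₁ − 1/(s₁+s₂) > P(1−λ₁) and λ₂/s₂ − 1/(s₁+s₂) > P(1−λ₂) do not both hold. -/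
/-! A sensor's condition requires `λ / s > P * (1 - λ)`, because the subtracted term
`1 / (s₁ + s₂)` is positive. For `λ < 1` this fails as soon as `s ≥ λ / (P * (1 - λ))`, however
small the other signal-to-noise ratio is, so one sensor above its threshold is enough. -/

section LinearOrderedField

variable {K : Type*} [Field K] [LinearOrder K] [IsStrictOrderedRing K]

lemma div_sub_lt_of_div_le {a c d s : K} (hc : 0 < c) (hd : 0 < d) (hs : 0 < s)
    (h : a / c ≤ s) : a / s - d < c :=
  calc
    a / s - d < a / s := sub_lt_self _ hd
    _ ≤ c := (div_le_comm₀ hc hs).mp h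

lemma not_xor_beats_forwarding_of_threshold_le {lam P s t : K} (hlam : lam < 1) (hP : 0 < P)
    (hs : 0 < s) (ht : 0 < t) (h : lam / (P * (1 - lam)) ≤ s) :
    ¬lam / s - 1 / t > P * (1 - lam) :=
  (div_sub_lt_of_div_le (mul_pos hP (sub_pos.mpr hlam)) (one_div_pos.mpr ht) hs h).not_gt

theorem xor_cannot_beat_both_at_high_snr_general {lam₁ lam₂ P : K}
    (h₁ : lam₁ < 1) (h₂ : lam₂ < 1) (hP : 0 < P) :
    ∃ S > (0 : K), ∀ s₁ > (0 : K), ∀ s₂ > (0 : K), (S ≤ s₁ ∨ S ≤ s₂) →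
      ¬(lam₁ / s₁ - 1 / (s₁ + s₂) > P * (1 - lam₁) ∧
        lam₂ / s₂ - 1 / (s₁ + s₂) > P * (1 - lam₂)) := by
  -- The `1` keeps `S` positive when neither threshold is.
  refine ⟨max 1 (max (lam₁ / (P * (1 - lam₁))) (lam₂ / (P * (1 - lam₂)))),
    lt_max_of_lt_left one_pos, ?_⟩
  rintro s₁ hs₁ s₂ hs₂ hS ⟨hxor₁, hxor₂⟩
  have hsum : 0 < s₁ + s₂ := add_pos hs₁ hs₂
  simp only [max_le_iff] at hS
  obtain ⟨-, hthr₁, -⟩ | ⟨-, -, hthr₂⟩ := hS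
  · exact not_xor_beats_forwarding_of_threshold_le h₁ hP hs₁ hsum hthr₁ hxor₁
  · exact not_xor_beats_forwarding_of_threshold_le h₂ hP hs₂ hsum hthr₂ hxor₂

end LinearOrderedField

/-- At high signal-to-noise ratios the XOR operation cannot beat both forwarding
options: for `λ₁, λ₂ ∈ [0,1)` and `P > 0`, there exists `S > 0` such that whenever
`s₁ ≥ S` or `s₂ ≥ S` (with `s₁, s₂ > 0`), the two threshold conditions cannot both
hold. -/
theorem xor_cannot_beat_both_at_high_snr
    (lam₁ lam₂ P : ℝ)
    (h₁ : lam₁ ∈ Set.Ico (0 : ℝ) 1) (h₂ : lam₂ ∈ Set.Ico (0 : ℝ) 1)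
    (hP : 0 < P) :
    ∃ S > (0 : ℝ), ∀ s₁ > (0 : ℝ), ∀ s₂ > (0 : ℝ), (S ≤ s₁ ∨ S ≤ s₂) →
      ¬(lam₁ / s₁ - 1 / (s₁ + s₂) > P * (1 - lam₁) ∧
        lam₂ / s₂ - 1 / (s₁ + s₂) > P * (1 - lam₂)) :=
  xor_cannot_beat_both_at_high_snr_general h₁.2 h₂.2 hP
end
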